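/- Proposition 1 (partial correctness of the substitutability semi-algorithm): assume the LTS S_A is deterministic, and fix sets of initial configurations C_R⁰ ⊆ C_R and C_A⁰ ⊆ C_A. Suppose there exists an initial configuration c_R⁰ ∈ C_R⁰ such that for every initial configuration c_A⁰ ∈ C_A⁰, the lock-step reachable set Reach of (c_R⁰, c_A⁰) contains a pair (c_R, c_A) witnessing one of the three ⊥-cases: (a) ¬ subst c_R c_A, or (b) c_R is a deadlock of S_R while c_A is not a deadlock of S_A, or (c) some shared label ope ∈ R_R ∩ R_A has a transition c_R →[ope] c_R' in S_R but no transition c_A →[ope] c_A' in S_A. Then S_R is not simulated by S_A with respect to component substitutability: there is no relation ρ satisfying clauses (0), (i), (ii) and (iv) such that every initial configuration of C_R⁰ is related by ρ to some initial configuration of C_A⁰. -/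

import Mathlib

/-!
Proposition 1: partial correctness of the substitutability semi-algorithm.
-/

variable {CR CA L : Type*}

/-- A configuration is a deadlock if it has no outgoing transition with any
label of the LTS's label set. -/
def DeadlockOf {C : Type*} (step : C → L → C → Prop) (R : Set L) (c : C) : Prop :=
  ∀ ope ∈ R, ∀ c', ¬ step c ope c'

/-- Clause (0): structural substitutability. -/
def Clause0 (subst : CR → CA → Prop) (ρ : CR → CA → Prop) : Prop :=
  ∀ cR cA, ρ cR cA → subst cR cA

/-- The strict-simulation clause (i). -/
def ClauseI (stepR : CR → L → CR → Prop) (stepA : CA → L → CA → Prop)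
    (RR RA : Set L) (ρ : CR → CA → Prop) : Prop :=
  ∀ cR cA, ρ cR cA → ∀ ope ∈ RR ∩ RA, ∀ cR', stepR cR ope cR' →
    ∃ cA', stepA cA ope cA' ∧ ρ cR' cA'

/-- The stuttering clause (ii). -/
def ClauseII (stepR : CR → L → CR → Prop)
    (RR RA : Set L) (ρ : CR → CA → Prop) : Prop :=
  ∀ cR cA, ρ cR cA → ∀ ope' ∈ RR \ RA, ∀ cR', stepR cR ope' cR' → ρ cR' cA

/-- The no-new-deadlock clause (iv). -/
def ClauseIV (stepR : CR → L → CR → Prop) (stepA : CA → L → CA → Prop)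
    (RR RA : Set L) (ρ : CR → CA → Prop) : Prop :=
  ∀ cR cA, ρ cR cA → DeadlockOf stepR RR cR → DeadlockOf stepA RA cA

/-- Determinism of an LTS. -/
def Deterministic (step : CA → L → CA → Prop) : Prop :=
  ∀ c ope c₁ c₂, step c ope c₁ → step c ope c₂ → c₁ = c₂

/-- The lock-step reachable set of `(cR0, cA0)`. -/
inductive Reach (stepR : CR → L → CR → Prop) (stepA : CA → L → CA → Prop)
    (RR RA : Set L) (cR0 : CR) (cA0 : CA) : CR → CA → Prop
  | init : Reach stepR stepA RR RA cR0 cA0 cR0 cA0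
  | shared {cR cA cR' cA' ope} : Reach stepR stepA RR RA cR0 cA0 cR cA →
      ope ∈ RR ∩ RA → stepR cR ope cR' → stepA cA ope cA' →
      Reach stepR stepA RR RA cR0 cA0 cR' cA'
  | new {cR cA cR' ope'} : Reach stepR stepA RR RA cR0 cA0 cR cA →
      ope' ∈ RR \ RA → stepR cR ope' cR' →
      Reach stepR stepA RR RA cR0 cA0 cR' cA

theorem proposition_one
    (stepR : CR → L → CR → Prop) (stepA : CA → L → CA → Prop)
    (RR RA : Set L) (subst : CR → CA → Prop)
    (hdet : Deterministic stepA)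
    (CR0 : Set CR) (CA0 : Set CA)
    (hbot : ∃ cR0 ∈ CR0, ∀ cA0 ∈ CA0, ∃ cR cA,
      Reach stepR stepA RR RA cR0 cA0 cR cA ∧
      ((¬ subst cR cA) ∨
       (DeadlockOf stepR RR cR ∧ ¬ DeadlockOf stepA RA cA) ∨
       (∃ ope ∈ RR ∩ RA, (∃ cR', stepR cR ope cR') ∧ ¬ ∃ cA', stepA cA ope cA'))) :
    ¬ ∃ ρ : CR → CA → Prop,
      Clause0 subst ρ ∧ ClauseI stepR stepA RR RA ρ ∧ ClauseII stepR RR RA ρ ∧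
      ClauseIV stepR stepA RR RA ρ ∧
      ∀ cR0 ∈ CR0, ∃ cA0 ∈ CA0, ρ cR0 cA0 := by
  rintro ⟨ρ, h0, hI, hII, hIV, hinit⟩
  obtain ⟨cR0, hR0, hb⟩ := hbot
  obtain ⟨cA0, hA0, hρ0⟩ := hinit cR0 hR0
  obtain ⟨cR, cA, hreach, hcase⟩ := hb cA0 hA0
  have hρ : ρ cR cA := by
    clear hcase
    induction hreach with
    | init => exact hρ0
    | shared _ hope hR hA ih =>
      obtain ⟨cA₂, hA₂, hρ₂⟩ := hI _ _ ih _ hope _ hR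
      rw [hdet _ _ _ _ hA hA₂]
      exact hρ₂
    | new _ hope hR ih => exact hII _ _ ih _ hope _ hR
  rcases hcase with h | ⟨hd, hnd⟩ | ⟨ope, hope, ⟨cR', hR⟩, hno⟩
  · exact h (h0 _ _ hρ)
  · exact hnd (hIV _ _ hρ hd)
  · obtain ⟨cA', hA, _⟩ := hI _ _ hρ _ hope _ hR
    exact hno ⟨cA', hA⟩
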